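/- arXiv:1101.0313 — 2 statements merged into one kernel-verified Lean document; each statement's English description precedes it below -/
import Mathlib

section
/- Let a < b be reals and G : [a,b] → ℝ a Lipschitz function with G(a) = a and G(b) = b. Then for every Lipschitz function f : ℝ → ℝ, ∫_a^b f(G(x))·G′(x) dx = ∫_a^b f(y) dy, where G′ is the (almost everywhere defined) derivative of G and the integrals are with respect to Lebesgue measure. (This is the dual formulation, against all Lipschitz 1-forms f dy, of the statement G_*([a,b]) = [a,b] as differential chains, the 1-dimensional case of the General Intermediate Value Theorem.) -/
noncomputable section

/-!
Let `F` be a primitive of `f` on the interval `G([a, b])`. It is Lipschitz there because `f` is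
bounded, so `F ∘ G` is absolutely continuous, and by the chain rule its derivative is
`f (G x) * G' x` at every interior point where `G` is differentiable, that is, almost everywhere.
The fundamental theorem of calculus for absolutely continuous functions then evaluates the integral
as `F (G b) - F (G a)`. No monotonicity of `G` enters: stretches of `[a, b]` on which `G`
backtracks cancel.
-/

open Set Filter MeasureTheory
open scoped NNReal Interval

section LipschitzComposition

variable {X Y : Type*} [PseudoMetricSpace X] [PseudoMetricSpace Y]
  {F : X → Y} {G : ℝ → X} {s : Set X} {C : ℝ≥0} {a b : ℝ}

theorem absolutelyContinuousOnInterval_comp_of_lipschitzOnWith (hF : LipschitzOnWith C F s)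
    (hG : AbsolutelyContinuousOnInterval G a b) (hGs : MapsTo G [[a, b]] s) :
    AbsolutelyContinuousOnInterval (F ∘ G) a b := by
  have h_bound : Tendsto (fun E : ℕ × (ℕ → ℝ × ℝ) ↦
      C * ∑ i ∈ Finset.range E.1, dist (G (E.2 i).1) (G (E.2 i).2))
      (AbsolutelyContinuousOnInterval.totalLengthFilter ⊓
        𝓟 (AbsolutelyContinuousOnInterval.disjWithin a b)) (nhds 0) := by
    simpa only [mul_zero] using Tendsto.const_mul (C : ℝ) hG
  refine squeeze_zero' (.of_forall fun E ↦ Finset.sum_nonneg fun i _ ↦ dist_nonneg) ?_ h_bound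
  filter_upwards [mem_inf_of_right (mem_principal_self _)] with E ⟨hE, _⟩
  rw [Finset.mul_sum]
  exact Finset.sum_le_sum fun i hi ↦
    hF.dist_le_mul _ (hGs (hE i hi).1) _ (hGs (hE i hi).2)

end LipschitzComposition

section Substitution

variable {F G f : ℝ → ℝ} {s : Set ℝ} {C : ℝ≥0} {a b c p q : ℝ}

theorem ae_hasDerivAt_comp_of_absolutelyContinuousOnInterval
    (hG : AbsolutelyContinuousOnInterval G a b) (hGs : MapsTo G [[a, b]] s)
    (hF : ∀ y ∈ s, HasDerivWithinAt F (f y) s y) :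
    ∀ᵐ x, x ∈ Ι a b → HasDerivAt (F ∘ G) (f (G x) * deriv G x) x := by
  -- `F` is only differentiable within `s`, so the right endpoint of `Ι a b` has to be discarded.
  filter_upwards [hG.ae_differentiableAt, Measure.ae_ne volume (max a b)] with x hGx hx_ne hx
  have hx_mem : x ∈ [[a, b]] := uIoc_subset_uIcc hx
  have h_nhds : [[a, b]] ∈ nhds x := Icc_mem_nhds hx.1 (hx.2.lt_of_ne hx_ne)
  exact ((hF (G x) (hGs hx_mem)).comp x (hGx hx_mem).hasDerivAt.hasDerivWithinAt
    hGs).hasDerivAt h_nhds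

theorem integral_comp_mul_deriv_eq_sub_of_hasDerivWithinAt
    (hG : AbsolutelyContinuousOnInterval G a b) (hs : Convex ℝ s) (hGs : MapsTo G [[a, b]] s)
    (hF : ∀ y ∈ s, HasDerivWithinAt F (f y) s y) (hfC : ∀ y ∈ s, ‖f y‖₊ ≤ C) :
    ∫ x in a..b, f (G x) * deriv G x = F (G b) - F (G a) := by
  have hFG : AbsolutelyContinuousOnInterval (F ∘ G) a b :=
    absolutelyContinuousOnInterval_comp_of_lipschitzOnWith
      (hs.lipschitzOnWith_of_nnnorm_hasDerivWithin_le hF hfC) hG hGs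
  calc ∫ x in a..b, f (G x) * deriv G x
      = ∫ x in a..b, deriv (F ∘ G) x := by
        refine intervalIntegral.integral_congr_ae ?_
        filter_upwards [ae_hasDerivAt_comp_of_absolutelyContinuousOnInterval hG hGs hF]
          with x hx hx_mem using (hx hx_mem).deriv.symm
    _ = F (G b) - F (G a) := hFG.integral_deriv_eq_sub

theorem hasDerivWithinAt_integral_of_continuousOn_Icc (hf : ContinuousOn f (Icc p q))
    (hc : c ∈ Icc p q) {y : ℝ} (hy : y ∈ Icc p q) :
    HasDerivWithinAt (fun u ↦ ∫ t in c..u, f t) (f y) (Icc p q) y := by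
  have : Fact (y ∈ Icc p q) := ⟨hy⟩
  exact intervalIntegral.integral_hasDerivWithinAt_right
    (hf.mono (uIcc_subset_Icc hc hy)).intervalIntegrable
    (hf.stronglyMeasurableAtFilter_nhdsWithin measurableSet_Icc y) (hf y hy)

theorem statement15_general (hG : AbsolutelyContinuousOnInterval G a b)
    (hf : ContinuousOn f (G '' [[a, b]])) :
    ∫ x in a..b, f (G x) * deriv G x = ∫ y in G a..G b, f y := by
  obtain ⟨p, q, h_image⟩ : ∃ p q, G '' [[a, b]] = Icc p q :=
    ⟨_, _, hG.continuousOn.image_uIcc_eq_Icc⟩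
  rw [h_image] at hf
  have hG_maps : MapsTo G [[a, b]] (Icc p q) := mapsTo_iff_image_subset.mpr h_image.subset
  obtain ⟨C, hC⟩ := isCompact_Icc.exists_bound_of_continuousOn hf
  have h_sub := integral_comp_mul_deriv_eq_sub_of_hasDerivWithinAt hG (convex_Icc p q) hG_maps
    (fun y hy ↦ hasDerivWithinAt_integral_of_continuousOn_Icc hf (hG_maps left_mem_uIcc) hy)
    (fun y hy ↦ NNReal.le_toNNReal_of_coe_le (hC y hy))
  rwa [intervalIntegral.integral_same, sub_zero] at h_sub

end Substitution

/-- General Intermediate Value Theorem in dimension one, dual formulation: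
if `G : [a,b] → ℝ` is Lipschitz with `G(a) = a` and `G(b) = b`, then for every Lipschitz
`f : ℝ → ℝ`, `∫_a^b f(G(x)) G'(x) dx = ∫_a^b f(y) dy`. -/
theorem statement15 (a b : ℝ) (hab : a < b) (G : ℝ → ℝ) (K : NNReal)
    (hG : LipschitzOnWith K G (Set.Icc a b)) (hGa : G a = a) (hGb : G b = b)
    (f : ℝ → ℝ) (L : NNReal) (hf : LipschitzWith L f) :
    ∫ x in a..b, f (G x) * deriv G x = ∫ y in a..b, f y := by
  rw [← uIcc_of_le hab.le] at hG
  simpa only [hGa, hGb] using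
    statement15_general hG.absolutelyContinuousOnInterval hf.continuous.continuousOn
end
end

section
/- Let B ⊆ ℝⁿ be the closed unit ball and G : B → ℝⁿ a Lipschitz map such that G(x) = x for every x with ‖x‖ = 1. Then for every bounded Lipschitz function f : ℝⁿ → ℝ, ∫_B f(G(x))·det(DG(x)) dx = ∫_B f(y) dy, where DG is the (Lebesgue-almost everywhere defined) total derivative of G and the integrals are with respect to Lebesgue measure. (This is the dual formulation, against all n-forms f dV of class B¹, of the statement G_*(B̃) = B̃ as differential chains, a consequence of the General Intermediate Value Theorem strengthening the classical fact that the image of such a map contains B.) -/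
noncomputable section

/-- Euclidean space `ℝⁿ`. -/
abbrev Euc (n : ℕ) := EuclideanSpace ℝ (Fin n)

/-!
Write `G = id + u`, where `u` vanishes on the boundary of `Ω`; extended by zero, `u` is Lipschitz on
the whole space. For small `t` the map `id + t • u` is a Lipschitz bijection of `Ω` with positive
Jacobian, so the change of variables formula gives
`∫_Ω p(x + t u(x)) det(1 + t Du(x)) dx = ∫_Ω p`. If `p` is polynomial along lines, the integrand is
a polynomial in `t` of degree bounded independently of `x`; its value at `t = 1` is then a fixed
linear combination of its values at finitely many small `t`, and the identity extends to `t = 1`.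
The Stone–Weierstrass theorem passes from such `p` to continuous functions.
-/

open Filter Function MeasureTheory Metric Module Polynomial Set Topology
open scoped NNReal

section PolynomialExtrapolation

theorem exists_eval_eq_sum_of_infinite {F : Type*} [Field F] {S : Set F} (hS : S.Infinite)
    (N : ℕ) (a : F) :
    ∃ (T : Finset F) (c : F → F), ↑T ⊆ S ∧
      ∀ q : F[X], q.natDegree ≤ N → q.eval a = ∑ t ∈ T, c t * q.eval t := by
  classical
  obtain ⟨T, hTS, hcard⟩ := hS.exists_subset_card_eq (N + 1)
  refine ⟨T, fun t ↦ (Lagrange.basis T id t).eval a, hTS, fun q hq ↦ ?_⟩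
  have hdeg : q.degree < T.card := by
    rw [hcard]
    exact (degree_le_of_natDegree_le hq).trans_lt (by exact_mod_cast N.lt_succ_self)
  conv_lhs => rw [Lagrange.eq_interpolate injective_id.injOn hdeg]
  simp only [Lagrange.interpolate_apply, eval_finsetSum, eval_mul, eval_C, id, mul_comm]

theorem integral_eq_of_polynomial_of_infinite {α : Type*} [MeasurableSpace α] {ν : Measure α}
    {h : ℝ → α → ℝ} {N : ℕ}
    (hpoly : ∀ x, ∃ q : ℝ[X], q.natDegree ≤ N ∧ ∀ t, q.eval t = h t x)
    {S : Set ℝ} (hS : S.Infinite) (hint : ∀ t ∈ S, Integrable (h t) ν)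
    {I : ℝ} (hI : ∀ t ∈ S, ∫ x, h t x ∂ν = I) (a : ℝ) :
    Integrable (h a) ν ∧ ∫ x, h a x ∂ν = I := by
  obtain ⟨T, c, hTS, hc⟩ := exists_eval_eq_sum_of_infinite hS N a
  have hsum : h a = fun x ↦ ∑ t ∈ T, c t * h t x := by
    ext x
    obtain ⟨q, hq, hqe⟩ := hpoly x
    simpa only [hqe] using hc q hq
  have hone : ∑ t ∈ T, c t = 1 := by simpa using (hc 1 (by simp)).symm
  have hterm : ∀ t ∈ T, Integrable (fun x ↦ c t * h t x) ν :=
    fun t ht ↦ (hint t (hTS ht)).const_mul (c t)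
  refine ⟨hsum ▸ integrable_finsetSum T hterm, ?_⟩
  calc ∫ x, h a x ∂ν = ∑ t ∈ T, c t * ∫ x, h t x ∂ν := by
        simp only [hsum, integral_finsetSum T hterm, integral_const_mul]
    _ = ∑ t ∈ T, c t * I := Finset.sum_congr rfl fun t ht ↦ by rw [hI t (hTS ht)]
    _ = I := by rw [← Finset.sum_mul, hone, one_mul]

end PolynomialExtrapolation

section PolynomialOnLines

variable {R V : Type*} [CommRing R] [AddCommGroup V] [Module R V]

/-- A function is polynomial on lines of degree at most `N` if its restriction to every
parametrized line `t ↦ x + t • v` is a polynomial in `t` of degree at most `N`. This is a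
coordinate-free substitute for polynomial functions; `N` is uniform in the line. -/
def IsPolynomialOnLines (R : Type*) {V : Type*} [CommRing R] [AddCommGroup V] [Module R V]
    (N : ℕ) (g : V → R) : Prop :=
  ∀ x v : V, ∃ q : R[X], q.natDegree ≤ N ∧ ∀ t : R, q.eval t = g (x + t • v)

namespace IsPolynomialOnLines

variable {M N : ℕ} {f g : V → R}

theorem const (c : R) : IsPolynomialOnLines R 0 (fun _ : V ↦ c) :=
  fun _ _ ↦ ⟨C c, by simp, by simp⟩

theorem linearMap (ℓ : V →ₗ[R] R) : IsPolynomialOnLines R 1 ℓ :=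
  fun x v ↦ ⟨C (ℓ v) * X + C (ℓ x), natDegree_linear_le, fun t ↦ by simp; ring⟩

theorem add (hf : IsPolynomialOnLines R M f) (hg : IsPolynomialOnLines R N g) :
    IsPolynomialOnLines R (max M N) (f + g) := fun x v ↦ by
  obtain ⟨p, hp, hpe⟩ := hf x v
  obtain ⟨q, hq, hqe⟩ := hg x v
  exact ⟨p + q, natDegree_add_le_of_le hp hq, fun t ↦ by simp [hpe, hqe]⟩

theorem mul (hf : IsPolynomialOnLines R M f) (hg : IsPolynomialOnLines R N g) :
    IsPolynomialOnLines R (M + N) (f * g) := fun x v ↦ by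
  obtain ⟨p, hp, hpe⟩ := hf x v
  obtain ⟨q, hq, hqe⟩ := hg x v
  exact ⟨p * q, natDegree_mul_le_of_le hp hq, fun t ↦ by simp [hpe, hqe]⟩

theorem det [Nontrivial R] [Module.Free R V] [Module.Finite R V] :
    IsPolynomialOnLines R (finrank R V) (LinearMap.det : (V →ₗ[R] V) → R) := fun A B ↦ by
  let b := finBasis R V
  let toMat := LinearMap.toMatrix b b
  refine ⟨((X : R[X]) • (toMat B).map C + (toMat A).map C).det, ?_, fun t ↦ ?_⟩
  · simpa using natDegree_det_X_add_C_le (toMat B) (toMat A)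
  · rw [← LinearMap.det_toMatrix b, ← coe_evalRingHom, RingHom.map_det]
    congr 1
    ext i j
    simp [toMat, add_comm, mul_comm _ t]

end IsPolynomialOnLines

/-- The subalgebra of continuous functions that are polynomial on lines, to which the
Stone–Weierstrass theorem is applied. -/
def polynomialOnLinesSubalgebra (E : Type*) [AddCommGroup E] [Module ℝ E] [TopologicalSpace E] :
    Subalgebra ℝ C(E, ℝ) where
  carrier := {g | ∃ N, IsPolynomialOnLines ℝ N g}
  mul_mem' := fun ⟨_, hf⟩ ⟨_, hg⟩ ↦ ⟨_, hf.mul hg⟩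
  add_mem' := fun ⟨_, hf⟩ ⟨_, hg⟩ ↦ ⟨_, hf.add hg⟩
  algebraMap_mem' c := ⟨0, .const c⟩

theorem separatesPoints_polynomialOnLinesSubalgebra {E : Type*} [AddCommGroup E] [Module ℝ E]
    [TopologicalSpace E] [SeparatingDual ℝ E] :
    (polynomialOnLinesSubalgebra E).SeparatesPoints := fun x y hxy ↦ by
  obtain ⟨ℓ, hℓ⟩ := SeparatingDual.exists_separating_of_ne (R := ℝ) hxy
  exact ⟨ℓ, ⟨(ℓ : C(E, ℝ)), ⟨1, .linearMap (ℓ : E →ₗ[ℝ] ℝ)⟩, rfl⟩, hℓ⟩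

theorem exists_seq_isPolynomialOnLines_tendstoUniformlyOn {E : Type*} [AddCommGroup E]
    [Module ℝ E] [TopologicalSpace E] [SeparatingDual ℝ E] {f : E → ℝ} (hf : Continuous f)
    {Q : Set E} (hQ : IsCompact Q) :
    ∃ p : ℕ → C(E, ℝ), (∀ k, ∃ N, IsPolynomialOnLines ℝ N (p k)) ∧
      TendstoUniformlyOn (fun k ↦ p k) f atTop Q := by
  choose p hp hpf using fun k : ℕ ↦
    ContinuousMap.exists_mem_subalgebra_near_continuous_of_isCompact_of_separatesPoints
      separatesPoints_polynomialOnLinesSubalgebra ⟨f, hf⟩ hQ (Nat.one_div_pos_of_nat (n := k))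
  refine ⟨p, hp, tendstoUniformlyOn_iff.2 fun ε hε ↦ ?_⟩
  filter_upwards [tendsto_one_div_add_atTop_nhds_zero_nat.eventually_lt_const hε] with k hk x hx
  rw [dist_comm, dist_eq_norm]
  exact (hpf k x hx).trans hk

end PolynomialOnLines

theorem tendsto_integral_comp_mul_of_tendstoUniformlyOn {α X : Type*} [MeasurableSpace α]
    {ν : Measure α} [TopologicalSpace X] {p : ℕ → X → ℝ} {f : X → ℝ} {Q : Set X}
    (hpf : TendstoUniformlyOn p f atTop Q) (hQ : IsCompact Q) (hp : ∀ k, Continuous (p k))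
    {φ : α → X} (hφ : AEStronglyMeasurable φ ν) (hφQ : ∀ᵐ x ∂ν, φ x ∈ Q)
    {w : α → ℝ} (hw : Integrable w ν) :
    Tendsto (fun k ↦ ∫ x, p k (φ x) * w x ∂ν) atTop (𝓝 (∫ x, f (φ x) * w x ∂ν)) := by
  have hf : ContinuousOn f Q :=
    hpf.continuousOn (Eventually.of_forall fun k ↦ (hp k).continuousOn).frequently
  obtain ⟨B, hB⟩ := hQ.exists_bound_of_continuousOn hf
  refine tendsto_integral_filter_of_dominated_convergence (fun x ↦ (B + 1) * ‖w x‖)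
    (Eventually.of_forall fun k ↦
      ((hp k).comp_aestronglyMeasurable hφ).mul hw.aestronglyMeasurable) ?_
    (hw.norm.const_mul _) ?_
  · filter_upwards [tendstoUniformlyOn_iff.1 hpf 1 one_pos] with k hk
    filter_upwards [hφQ] with x hx
    rw [norm_mul]
    gcongr
    calc ‖p k (φ x)‖ ≤ ‖f (φ x)‖ + ‖f (φ x) - p k (φ x)‖ := norm_le_norm_add_norm_sub _ _
      _ ≤ B + 1 := add_le_add (hB _ hx) (by simpa [dist_eq_norm] using (hk _ hx).le)
  · filter_upwards [hφQ] with x hx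
    exact (hpf.tendsto_at hx).mul_const _

section LipschitzPerturbation

theorem inter_frontier_nonempty_of_isPreconnected {X : Type*} [TopologicalSpace X] {s t : Set X}
    (ht : IsPreconnected t) (hts : (t ∩ s).Nonempty) (hts' : (t \ s).Nonempty) :
    (t ∩ frontier s).Nonempty := by
  by_contra! hempty
  have hfrontier : ∀ z ∈ t, z ∉ frontier s := fun z hz hz' ↦ hempty.le ⟨hz, hz'⟩
  obtain ⟨x, hxt, hxs⟩ := hts
  obtain ⟨y, hyt, hys⟩ := hts'
  have hx : x ∈ interior s := by
    by_contra h
    exact hfrontier x hxt ⟨subset_closure hxs, h⟩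
  have hy : y ∈ (closure s)ᶜ := fun h ↦ hfrontier y hyt ⟨h, fun h' ↦ hys (interior_subset h')⟩
  have hcover : t ⊆ interior s ∪ (closure s)ᶜ := fun z hz ↦ by
    by_contra! h
    simp only [mem_union, mem_compl_iff, not_or, not_not] at h
    exact hfrontier z hz ⟨h.2, h.1⟩
  obtain ⟨z, -, hz, hz'⟩ :=
    ht _ _ isOpen_interior isClosed_closure.isOpen_compl hcover ⟨x, hxt, hx⟩ ⟨y, hyt, hy⟩
  exact hz' (interior_subset_closure hz)

variable {E : Type*} [NormedAddCommGroup E] [NormedSpace ℝ E]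

theorem lipschitzWith_indicator_of_eqOn_frontier {F : Type*} [SeminormedAddCommGroup F]
    {s : Set E} {u : E → F} {K : ℝ≥0} (hu : LipschitzOnWith K u (closure s))
    (hu₀ : EqOn u 0 (frontier s)) : LipschitzWith K (s.indicator u) := by
  have hcross : ∀ x ∈ s, ∀ y ∉ s, dist (u x) 0 ≤ K * dist x y := fun x hx y hy ↦ by
    obtain ⟨z, hz, hzs⟩ := inter_frontier_nonempty_of_isPreconnected
      (convex_segment x y).isPreconnected ⟨x, left_mem_segment ℝ x y, hx⟩
      ⟨y, right_mem_segment ℝ x y, hy⟩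
    have hxz : dist x z ≤ dist x y := by
      linarith [dist_add_dist_of_mem_segment hz, dist_nonneg (x := z) (y := y)]
    calc dist (u x) 0 = dist (u x) (u z) := by rw [hu₀ hzs, Pi.zero_apply]
      _ ≤ K * dist x z := hu.dist_le_mul x (subset_closure hx) z hzs.1
      _ ≤ K * dist x y := by gcongr
  refine .of_dist_le_mul fun x y ↦ ?_
  by_cases hx : x ∈ s <;> by_cases hy : y ∈ s
  · simpa [hx, hy] using hu.dist_le_mul x (subset_closure hx) y (subset_closure hy)
  · simpa [hx, hy] using hcross x hx y hy
  · simpa [hx, hy, dist_comm] using hcross y hy x hx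
  · simp only [hx, hy, not_false_eq_true, indicator_of_notMem, dist_self]
    positivity

theorem bijective_id_add_of_lipschitzWith [CompleteSpace E] {u : E → E} {C : ℝ≥0}
    (hu : LipschitzWith C u) (hC : C < 1) : Bijective (fun x ↦ x + u x) := by
  have happrox : ApproximatesLinearOn (fun x ↦ x + u x)
      (ContinuousLinearEquiv.refl ℝ E : E →L[ℝ] E) univ C :=
    ApproximatesLinearOn.approximatesLinearOn_iff_lipschitzOnWith.2 <| by
      convert! hu.lipschitzOnWith (s := univ) using 1
      ext x
      simp
  have hC' : Subsingleton E ∨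
      C < ‖((ContinuousLinearEquiv.refl ℝ E).symm : E →L[ℝ] E)‖₊⁻¹ := by
    rcases subsingleton_or_nontrivial E with h | h
    · exact .inl h
    · exact .inr (by simpa using hC)
  exact ⟨injOn_univ.1 (happrox.injOn hC'), happrox.surjective hC'⟩

theorem image_eq_of_bijective_of_eqOn_compl {α : Type*} {T : α → α} {s : Set α}
    (hT : Bijective T) (hs : EqOn T id sᶜ) : T '' s = s := by
  rw [← compl_inj_iff, ← image_compl_eq hT, hs.image_eq, image_id]

theorem det_one_add_pos_of_norm_lt_one [CompleteSpace E] {A : E →L[ℝ] E} (hA : ‖A‖ < 1) :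
    0 < (1 + A).det := by
  have hne : ∀ B ∈ ball (0 : E →L[ℝ] E) 1, (1 + B).det ≠ 0 := fun B hB ↦ by
    have hunit : IsUnit (1 + B) := by
      simpa using isUnit_one_sub_of_norm_lt_one (x := -B) (by simpa using hB)
    exact ((hunit.map (ContinuousLinearMap.toLinearMapRingHom : (E →L[ℝ] E) →+* _)).map
      LinearMap.det).ne_zero
  have hcont : ContinuousOn (fun B : E →L[ℝ] E ↦ (1 + B).det) (ball 0 1) :=
    (ContinuousLinearMap.continuous_det.comp (by fun_prop)).continuousOn
  by_contra! hneg
  obtain ⟨B, hB, hB₀⟩ := (convex_ball (0 : E →L[ℝ] E) 1).isPreconnected.intermediate_value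
    (by simpa using hA) (mem_ball_self one_pos) hcont
    ⟨hneg, by simp [ContinuousLinearMap.det]⟩
  exact hne B hB hB₀

end LipschitzPerturbation

section ChangeOfVariables

variable {E : Type*} [NormedAddCommGroup E] [NormedSpace ℝ E] [FiniteDimensional ℝ E]
  [MeasurableSpace E] [BorelSpace E] {μ : Measure E} [μ.IsAddHaarMeasure]

theorem addHaar_image_eq_zero_of_lipschitzOnWith {T : E → E} {C : ℝ≥0} {s : Set E}
    (hT : LipschitzOnWith C T s) (hs : μ s = 0) : μ (T '' s) = 0 := by
  have hH : μH[finrank ℝ E] s = 0 := Measure.absolutelyContinuous_isAddHaarMeasure _ μ hs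
  refine Measure.absolutelyContinuous_isAddHaarMeasure μ μH[finrank ℝ E] (le_antisymm ?_ bot_le)
  simpa [hH] using hT.hausdorffMeasure_image_le (d := finrank ℝ E) (by positivity)

theorem integral_image_eq_integral_abs_det_fderiv_smul_of_lipschitzWith {F : Type*}
    [NormedAddCommGroup F] [NormedSpace ℝ F] {T : E → E} {C : ℝ≥0} (hT : LipschitzWith C T)
    {s : Set E} (hs : MeasurableSet s) (hinj : InjOn T s) (g : E → F) :
    (IntegrableOn g (T '' s) μ ↔
      IntegrableOn (fun x ↦ |(fderiv ℝ T x).det| • g (T x)) s μ) ∧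
    ∫ y in T '' s, g y ∂μ = ∫ x in s, |(fderiv ℝ T x).det| • g (T x) ∂μ := by
  set D := {x | DifferentiableAt ℝ T x}
  have hD : MeasurableSet D := measurableSet_of_differentiableAt ℝ T
  have hDs : (s ∩ D : Set E) =ᵐ[μ] s :=
    inter_ae_eq_left_of_ae_eq_univ (eventuallyEq_univ.2 hT.ae_differentiableAt)
  have himage : (T '' (s ∩ D) : Set E) =ᵐ[μ] T '' s := by
    refine (image_mono inter_subset_left).eventuallyLE.antisymm (ae_le_set.2 ?_)
    rw [← hinj.image_sdiff_subset inter_subset_left]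
    exact addHaar_image_eq_zero_of_lipschitzOnWith hT.lipschitzOnWith (ae_le_set.1 hDs.symm.le)
  have hderiv : ∀ x ∈ s ∩ D, HasFDerivWithinAt T (fderiv ℝ T x) (s ∩ D) x :=
    fun x hx ↦ hx.2.hasFDerivAt.hasFDerivWithinAt
  have hinjD : InjOn T (s ∩ D) := hinj.mono inter_subset_left
  rw [← integrableOn_congr_set_ae himage, ← integrableOn_congr_set_ae hDs,
    ← setIntegral_congr_set himage, ← setIntegral_congr_set hDs]
  exact ⟨integrableOn_image_iff_integrableOn_abs_det_fderiv_smul μ (hs.inter hD) hderiv hinjD g,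
    integral_image_eq_integral_abs_det_fderiv_smul μ (hs.inter hD) hderiv hinjD g⟩

theorem integral_comp_id_add_mul_det_of_lt_one {u : E → E} {C : ℝ≥0} (hu : LipschitzWith C u)
    (hC : C < 1) {s : Set E} (hs : MeasurableSet s) (hus : EqOn u 0 sᶜ) {g : E → ℝ}
    (hg : IntegrableOn g s μ) :
    IntegrableOn (fun x ↦ g (x + u x) * (1 + fderiv ℝ u x).det) s μ ∧
    ∫ x in s, g (x + u x) * (1 + fderiv ℝ u x).det ∂μ = ∫ y in s, g y ∂μ := by
  let T : E → E := fun x ↦ x + u x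
  have hT : LipschitzWith (1 + C) T := LipschitzWith.id.add hu
  have hbij : Bijective T := bijective_id_add_of_lipschitzWith hu hC
  have himage : T '' s = s :=
    image_eq_of_bijective_of_eqOn_compl hbij fun x hx ↦ by simp [T, hus hx]
  have hjac : ∀ᵐ x ∂μ.restrict s,
      |(fderiv ℝ T x).det| • g (T x) = g (T x) * (1 + fderiv ℝ u x).det := by
    filter_upwards [ae_restrict_of_ae hu.ae_differentiableAt] with x hx
    have hderiv : fderiv ℝ T x = 1 + fderiv ℝ u x :=
      ((hasFDerivAt_id x).add hx.hasFDerivAt).fderiv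
    have hpos : 0 < (1 + fderiv ℝ u x).det := det_one_add_pos_of_norm_lt_one <|
      (norm_fderiv_le_of_lipschitz ℝ hu).trans_lt (by exact_mod_cast hC)
    rw [hderiv, abs_of_pos hpos, smul_eq_mul, mul_comm]
  obtain ⟨hiff, heq⟩ := integral_image_eq_integral_abs_det_fderiv_smul_of_lipschitzWith
    (μ := μ) hT hs hbij.injective.injOn g
  rw [himage] at hiff heq
  exact ⟨(hiff.1 hg).congr hjac, (heq.trans (integral_congr_ae hjac)).symm⟩

theorem integral_comp_id_add_mul_det_of_isPolynomialOnLines {u : E → E} {K : ℝ≥0}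
    (hu : LipschitzWith K u) {s : Set E} (hs : MeasurableSet s) (hus : EqOn u 0 sᶜ)
    {p : E → ℝ} {N : ℕ} (hp : IsPolynomialOnLines ℝ N p) (hps : IntegrableOn p s μ) :
    IntegrableOn (fun x ↦ p (x + u x) * (1 + fderiv ℝ u x).det) s μ ∧
    ∫ x in s, p (x + u x) * (1 + fderiv ℝ u x).det ∂μ = ∫ y in s, p y ∂μ := by
  let h : ℝ → E → ℝ := fun t x ↦ p (x + t • u x) * (1 + t • fderiv ℝ u x).det
  have hpoly : ∀ x, ∃ q : ℝ[X], q.natDegree ≤ N + finrank ℝ E ∧ ∀ t, q.eval t = h t x :=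
    fun x ↦ by
      obtain ⟨q₁, hq₁, hq₁e⟩ := hp x (u x)
      obtain ⟨q₂, hq₂, hq₂e⟩ := IsPolynomialOnLines.det (R := ℝ) (V := E) 1 (fderiv ℝ u x)
      exact ⟨q₁ * q₂, natDegree_mul_le_of_le hq₁ hq₂, fun t ↦ by rw [eval_mul, hq₁e, hq₂e]; rfl⟩
  let S : Set ℝ := {t | ‖t‖₊ * K < 1}
  have hS : S.Infinite := infinite_of_mem_nhds 0 <|
    (isOpen_lt (by fun_prop) continuous_const).mem_nhds (by simp)
  have hsmall : ∀ t ∈ S, IntegrableOn (h t) s μ ∧ ∫ x in s, h t x ∂μ = ∫ y in s, p y ∂μ :=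
    fun t ht ↦ by
      have := integral_comp_id_add_mul_det_of_lt_one (μ := μ) ((lipschitzWith_smul t).comp hu) ht
        hs (fun x hx ↦ by simp [hus hx]) hps
      have hderiv : fderiv ℝ ((t • ·) ∘ u) = t • fderiv ℝ u := fderiv_const_smul_field t
      rwa [hderiv] at this
  simpa only [IntegrableOn, h, one_smul] using integral_eq_of_polynomial_of_infinite hpoly hS
    (fun t ht ↦ (hsmall t ht).1) (fun t ht ↦ (hsmall t ht).2) 1

theorem integral_comp_id_add_mul_det {u : E → E} {K : ℝ≥0} (hu : LipschitzWith K u) {s : Set E}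
    (hs : MeasurableSet s) (hsb : Bornology.IsBounded s) (hus : EqOn u 0 sᶜ) {f : E → ℝ}
    (hf : Continuous f) :
    ∫ x in s, f (x + u x) * (1 + fderiv ℝ u x).det ∂μ = ∫ y in s, f y ∂μ := by
  let φ : E → E := fun x ↦ x + u x
  have hφ : Continuous φ := continuous_id.add hu.continuous
  have hs_compact : IsCompact (closure s) := hsb.isCompact_closure
  have hint {g : E → ℝ} (hg : Continuous g) : IntegrableOn g s μ :=
    (hg.continuousOn.integrableOn_compact hs_compact).mono_set subset_closure
  let Q := closure s ∪ φ '' closure s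
  have hQ : IsCompact Q := hs_compact.union (hs_compact.image hφ)
  have hmemQ : ∀ᵐ x ∂μ.restrict s, x ∈ Q ∧ φ x ∈ Q := ae_restrict_of_forall_mem hs fun x hx ↦
    ⟨.inl (subset_closure hx), .inr (mem_image_of_mem φ (subset_closure hx))⟩
  obtain ⟨p, hp, hpf⟩ := exists_seq_isPolynomialOnLines_tendstoUniformlyOn hf hQ
  have hdet : IntegrableOn (fun x ↦ (1 + fderiv ℝ u x).det) s μ := by
    simpa using (integral_comp_id_add_mul_det_of_isPolynomialOnLines hu hs hus
      (.const 1) (hint continuous_const)).1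
  have hlim := tendsto_integral_comp_mul_of_tendstoUniformlyOn hpf hQ (fun k ↦ (p k).continuous)
    hφ.aestronglyMeasurable (hmemQ.mono fun _ h ↦ h.2) hdet
  have hlim' := tendsto_integral_comp_mul_of_tendstoUniformlyOn hpf hQ (fun k ↦ (p k).continuous)
    continuous_id.aestronglyMeasurable (hmemQ.mono fun _ h ↦ h.1)
    (hint (continuous_const (y := (1 : ℝ))))
  simp only [mul_one, id] at hlim'
  refine tendsto_nhds_unique hlim (hlim'.congr fun k ↦ ?_)
  obtain ⟨N, hN⟩ := hp k
  exact (integral_comp_id_add_mul_det_of_isPolynomialOnLines hu hs hus hN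
    (hint (p k).continuous)).2.symm

theorem closedBall_ae_eq_ball (x : E) {r : ℝ} (hr : r ≠ 0) : closedBall x r =ᵐ[μ] ball x r := by
  rw [← interior_closedBall x hr]
  exact (interior_ae_eq_of_null_frontier ((convex_closedBall x r).addHaar_frontier μ)).symm

theorem statement16_general {Ω : Set E} (hΩ : IsOpen Ω) (hΩb : Bornology.IsBounded Ω)
    {G : E → E} {K : ℝ≥0} (hG : LipschitzOnWith K G (closure Ω)) (hGid : EqOn G id (frontier Ω))
    {f : E → ℝ} (hf : Continuous f) :
    ∫ x in Ω, f (G x) * (fderiv ℝ G x).det ∂μ = ∫ y in Ω, f y ∂μ := by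
  let u : E → E := Ω.indicator (G - id)
  have hu : LipschitzWith (K + 1) u := lipschitzWith_indicator_of_eqOn_frontier
    (hG.sub LipschitzWith.id.lipschitzOnWith) fun x hx ↦ by simp [hGid hx]
  rw [← integral_comp_id_add_mul_det hu hΩ.measurableSet hΩb
    (fun x hx ↦ indicator_of_notMem hx _) hf]
  refine setIntegral_congr_ae hΩ.measurableSet ?_
  filter_upwards [hu.ae_differentiableAt (μ := μ)] with x hx hxΩ
  have hux : x + u x = G x := by simp [u, hxΩ]
  have hGu : G =ᶠ[𝓝 x] id + u := by
    filter_upwards [hΩ.mem_nhds hxΩ] with y hy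
    simp [u, hy]
  have hderiv : fderiv ℝ G x = 1 + fderiv ℝ u x :=
    hGu.fderiv_eq.trans ((hasFDerivAt_id x).add hx.hasFDerivAt).fderiv
  rw [hux, hderiv]

end ChangeOfVariables

/-- General Intermediate Value Theorem, dual formulation: if `G` is a
Lipschitz self-map of the closed unit ball `B ⊆ ℝⁿ` fixing the unit sphere pointwise, then for
every bounded Lipschitz `f : ℝⁿ → ℝ`, `∫_B f(G(x)) det(DG(x)) dx = ∫_B f(y) dy`. -/
theorem statement16 (n : ℕ) (G : Euc n → Euc n) (K : NNReal)
    (hG : LipschitzOnWith K G (Metric.closedBall (0 : Euc n) 1))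
    (hGsphere : ∀ x : Euc n, ‖x‖ = 1 → G x = x)
    (f : Euc n → ℝ) (L : NNReal) (hf : LipschitzWith L f)
    (M : ℝ) (hfbd : ∀ y : Euc n, |f y| ≤ M) :
    ∫ x in Metric.closedBall (0 : Euc n) 1,
        f (G x) * LinearMap.det (fderiv ℝ G x : Euc n →ₗ[ℝ] Euc n) =
      ∫ y in Metric.closedBall (0 : Euc n) 1, f y := by
  rw [setIntegral_congr_set (closedBall_ae_eq_ball 0 one_ne_zero),
    setIntegral_congr_set (closedBall_ae_eq_ball 0 one_ne_zero)]
  exact statement16_general isOpen_ball isBounded_ball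
    (by rwa [closure_ball _ one_ne_zero])
    (fun x hx ↦ hGsphere x (by simpa [frontier_ball _ one_ne_zero] using hx)) hf.continuous
end
end
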